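/- For any x, v ∈ ℝ³ with x ≠ 0, setting H = |v|² + q/|x|, L = x × v and R = v × (x × v) + (q/2)·x/|x|, one has the algebraic identities R·L = 0 and 4|R|² = 4H|L|² + q². Moreover the vector A := (2q√H R + 4H L×R) / (4H|L|² + q²) satisfies |A|² = H, A·L = 0 and A·R = (q/2)√H. -/

import Mathlib

/-!
Everything follows from the two basic facts about the cross product, `a × b ⊥ a, b` and Lagrange's
identity `|a × b|² = |a|²|b|² - (a·b)²`. Since `v ⊥ L` and `x·(v × L) = |L|²`, expanding
`R = v × L + (q/2) x/|x|` gives `|R|² = |v|²|L|² + (q/|x|)|L|² + q²/4`, that is, `4|R|² = 4H|L|² + q²`.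
The denominator of `A` is therefore `4|R|²`, and as `L`, `R` and `L × R` are pairwise orthogonal, the
identities for `A` are Pythagoras' theorem together with `|L × R|² = |L|²|R|²`.
-/

open scoped RealInnerProductSpace

noncomputable section

/-- Euclidean three-space. -/
abbrev R3 : Type := EuclideanSpace ℝ (Fin 3)

/-- The cross product on `ℝ³`. -/
def cross3 (x y : R3) : R3 :=
  (WithLp.equiv 2 (Fin 3 → ℝ)).symm
    ![x 1 * y 2 - x 2 * y 1, x 2 * y 0 - x 0 * y 2, x 0 * y 1 - x 1 * y 0]

/-- The energy `H(x,v) = |v|² + q/|x|` of the repulsive Kepler problem. -/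
def keplerH (q : ℝ) (x v : R3) : ℝ := ‖v‖ ^ 2 + q / ‖x‖

/-- The Runge–Lenz vector `R(x,v) = v × (x × v) + (q/2)·x/|x|`. -/
def rungeLenz (q : ℝ) (x v : R3) : R3 :=
  cross3 v (cross3 x v) + (q / 2) • ‖x‖⁻¹ • x

lemma inner_eq_coords (a b : R3) : ⟪a, b⟫ = a 0 * b 0 + a 1 * b 1 + a 2 * b 2 := by
  simp [PiLp.inner_apply, Fin.sum_univ_three, mul_comm]

lemma inner_cross3_left (a b : R3) : ⟪cross3 a b, a⟫ = 0 := by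
  simp [inner_eq_coords, cross3]; ring

lemma inner_cross3_right (a b : R3) : ⟪cross3 a b, b⟫ = 0 := by
  simp [inner_eq_coords, cross3]; ring

/-- Lagrange's identity. -/
lemma norm_cross3_sq (a b : R3) :
    ‖cross3 a b‖ ^ 2 = ‖a‖ ^ 2 * ‖b‖ ^ 2 - ⟪a, b⟫ ^ 2 := by
  simp only [← real_inner_self_eq_norm_sq, inner_eq_coords]
  simp [cross3]; ring

/-- The scalar triple product `(v × L)·x` at `L = x × v`. -/
lemma inner_cross3_cross3 (x v : R3) :
    ⟪cross3 v (cross3 x v), x⟫ = ‖cross3 x v‖ ^ 2 := by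
  simp only [← real_inner_self_eq_norm_sq, inner_eq_coords]
  simp [cross3]; ring

lemma inner_rungeLenz_cross3 (q : ℝ) (x v : R3) :
    ⟪rungeLenz q x v, cross3 x v⟫ = 0 := by
  have h : ⟪x, cross3 x v⟫ = 0 := by rw [real_inner_comm]; exact inner_cross3_left x v
  simp [rungeLenz, inner_add_left, real_inner_smul_left, inner_cross3_right, h]

lemma norm_rungeLenz_sq (q : ℝ) (x v : R3) (hx : x ≠ 0) :
    4 * ‖rungeLenz q x v‖ ^ 2 = 4 * keplerH q x v * ‖cross3 x v‖ ^ 2 + q ^ 2 := by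
  have hx' : ‖x‖ ≠ 0 := norm_ne_zero_iff.mpr hx
  have h : ⟪v, cross3 x v⟫ = 0 := by rw [real_inner_comm]; exact inner_cross3_right x v
  have hn : ‖(q / 2) • ‖x‖⁻¹ • x‖ ^ 2 = q ^ 2 / 4 := by
    rw [norm_smul, norm_smul, norm_inv, norm_norm, inv_mul_cancel₀ hx', mul_one,
      Real.norm_eq_abs, sq_abs]
    ring
  rw [rungeLenz, norm_add_sq_real, hn, real_inner_smul_right, real_inner_smul_right,
    inner_cross3_cross3, norm_cross3_sq v, h, keplerH]
  field_simp
  ring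

/-- For `x ≠ 0` one has `R·L = 0` and `4|R|² = 4H|L|² + q²`; moreover the asymptotic
action `A = (2q√H·R + 4H·L×R)/(4H|L|² + q²)` satisfies `|A|² = H`, `A·L = 0` and
`A·R = (q/2)√H`. -/
theorem kepler_conserved_quantities_algebra (q : ℝ) (hq : 0 < q)
    (x v : R3) (hx : x ≠ 0) :
    ⟪rungeLenz q x v, cross3 x v⟫ = (0 : ℝ) ∧
    4 * ‖rungeLenz q x v‖ ^ 2 = 4 * keplerH q x v * ‖cross3 x v‖ ^ 2 + q ^ 2 ∧
    (let H := keplerH q x v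
     let L := cross3 x v
     let R := rungeLenz q x v
     let A := (4 * H * ‖L‖ ^ 2 + q ^ 2)⁻¹ •
       ((2 * q * Real.sqrt H) • R + (4 * H) • cross3 L R)
     ‖A‖ ^ 2 = H ∧ ⟪A, L⟫ = (0 : ℝ) ∧ ⟪A, R⟫ = q / 2 * Real.sqrt H) := by
  have hRL := inner_rungeLenz_cross3 q x v
  have hRR := norm_rungeLenz_sq q x v hx
  refine ⟨hRL, hRR, ?_⟩
  have hH : 0 ≤ keplerH q x v := by unfold keplerH; positivity
  have hD : 0 < 4 * keplerH q x v * ‖cross3 x v‖ ^ 2 + q ^ 2 := by positivity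
  intro H L R A
  change ⟪R, L⟫ = 0 at hRL
  change 4 * ‖R‖ ^ 2 = 4 * H * ‖L‖ ^ 2 + q ^ 2 at hRR
  change 0 ≤ H at hH
  change 0 < 4 * H * ‖L‖ ^ 2 + q ^ 2 at hD
  have hLR : ⟪L, R⟫ = 0 := by rw [real_inner_comm]; exact hRL
  have hRC : ⟪R, cross3 L R⟫ = 0 := by rw [real_inner_comm]; exact inner_cross3_right L R
  have hs : Real.sqrt H ^ 2 = H := Real.sq_sqrt hH
  have hA : A = (4 * ‖R‖ ^ 2)⁻¹ •
      ((2 * q * Real.sqrt H) • R + (4 * H) • cross3 L R) := by rw [hRR]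
  have hR : ‖R‖ ≠ 0 := by intro h; rw [h] at hRR; linarith
  clear_value A H L R
  subst hA
  refine ⟨?_, ?_, ?_⟩
  · have key : ‖(2 * q * Real.sqrt H) • R + (4 * H) • cross3 L R‖ ^ 2
        = H * (4 * ‖R‖ ^ 2) ^ 2 := by
      rw [norm_add_sq_real, real_inner_smul_left, real_inner_smul_right, hRC, norm_smul, norm_smul,
        mul_pow, mul_pow, norm_cross3_sq, hLR, Real.norm_eq_abs, Real.norm_eq_abs, sq_abs, sq_abs]
      linear_combination 4 * q ^ 2 * ‖R‖ ^ 2 * hs - 4 * H * ‖R‖ ^ 2 * hRR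
    rw [norm_smul, mul_pow, key, Real.norm_eq_abs, sq_abs]
    field_simp
  · simp [real_inner_smul_left, inner_add_left, hRL, inner_cross3_left]
  · rw [real_inner_smul_left, inner_add_left, real_inner_smul_left, real_inner_smul_left,
      inner_cross3_right, real_inner_self_eq_norm_sq]
    field_simp
    ring
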